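/- Let E be a real normed vector space and let P, Q ⊆ E be sets. Suppose the collection 𝓕_P = {F | F nonempty and F is an exposed face of P} is finite with n elements and the collection 𝓕_Q = {G | G nonempty and G is an exposed face of Q} is finite with m elements. Then the collection {C | C nonempty and C is an exposed face of P + Q} is finite and has at most n · m elements. -/

import Mathlib

open Pointwise

/-- The nonempty exposed faces of `A`. The empty set, which `IsExposed` counts as an exposed face
of every set, is left out. -/
def exposedFaces (𝕜 : Type*) {E : Type*} [TopologicalSpace 𝕜] [Semiring 𝕜] [Preorder 𝕜]
    [AddCommMonoid E] [TopologicalSpace E] [Module 𝕜 E] (A : Set E) : Set (Set E) :=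
  {F | F.Nonempty ∧ IsExposed 𝕜 A F}

section MinkowskiSum

variable {𝕜 : Type*} {E : Type*} [TopologicalSpace 𝕜] [Ring 𝕜] [PartialOrder 𝕜]
  [AddCommMonoid E] [TopologicalSpace E] [Module 𝕜 E]

theorem mem_exposedFaces_iff {A F : Set E} :
    F ∈ exposedFaces 𝕜 A ↔ F.Nonempty ∧ ∃ l : StrongDual 𝕜 E, F = l.toExposed A :=
  ⟨fun ⟨hne, hF⟩ => ⟨hne, hF hne⟩, fun ⟨hne, hF⟩ => ⟨hne, fun _ => hF⟩⟩

variable [IsOrderedAddMonoid 𝕜]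

theorem add_mem_toExposed_add_iff (l : StrongDual 𝕜 E) {A B : Set E} {a b : E}
    (ha : a ∈ A) (hb : b ∈ B) :
    a + b ∈ l.toExposed (A + B) ↔ a ∈ l.toExposed A ∧ b ∈ l.toExposed B := by
  constructor
  · rintro ⟨-, hmax⟩
    refine ⟨⟨ha, fun x hx => ?_⟩, ⟨hb, fun y hy => ?_⟩⟩
    · simpa only [map_add, add_le_add_iff_right] using hmax _ (Set.add_mem_add hx hb)
    · simpa only [map_add, add_le_add_iff_left] using hmax _ (Set.add_mem_add ha hy)
  · rintro ⟨⟨-, hmaxA⟩, ⟨-, hmaxB⟩⟩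
    refine ⟨Set.add_mem_add ha hb, ?_⟩
    rintro _ ⟨x, hx, y, hy, rfl⟩
    simpa only [map_add] using add_le_add (hmaxA x hx) (hmaxB y hy)

theorem toExposed_add (l : StrongDual 𝕜 E) (A B : Set E) :
    l.toExposed (A + B) = l.toExposed A + l.toExposed B := by
  apply Set.Subset.antisymm
  · intro x hx
    obtain ⟨a, ha, b, hb, rfl⟩ := hx.1
    obtain ⟨ha', hb'⟩ := (add_mem_toExposed_add_iff l ha hb).1 hx
    exact Set.add_mem_add ha' hb'
  · rintro _ ⟨a, ha, b, hb, rfl⟩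
    exact (add_mem_toExposed_add_iff l ha.1 hb.1).2 ⟨ha, hb⟩

theorem exposedFaces_add_subset (A B : Set E) :
    exposedFaces 𝕜 (A + B) ⊆ exposedFaces 𝕜 A + exposedFaces 𝕜 B := by
  intro C hC
  obtain ⟨hne, l, rfl⟩ := mem_exposedFaces_iff.1 hC
  rw [toExposed_add] at hne ⊢
  obtain ⟨hneA, hneB⟩ := Set.add_nonempty.1 hne
  exact Set.add_mem_add (mem_exposedFaces_iff.2 ⟨hneA, l, rfl⟩)
    (mem_exposedFaces_iff.2 ⟨hneB, l, rfl⟩)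

open scoped Cardinal in
theorem card_exposedFaces_minkowski_sum_le_general (P Q : Set E) :
    #(exposedFaces 𝕜 (P + Q)) ≤ #(exposedFaces 𝕜 P) * #(exposedFaces 𝕜 Q) :=
  (Cardinal.mk_le_mk_of_subset (exposedFaces_add_subset P Q)).trans Cardinal.mk_add_le

end MinkowskiSum

theorem card_exposedFaces_minkowski_sum_le {E : Type*} [NormedAddCommGroup E]
    [NormedSpace ℝ E] (P Q : Set E) (n m : ℕ)
    (hP : {F : Set E | F.Nonempty ∧ IsExposed ℝ P F}.Finite)
    (hPn : Set.ncard {F : Set E | F.Nonempty ∧ IsExposed ℝ P F} = n)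
    (hQ : {G : Set E | G.Nonempty ∧ IsExposed ℝ Q G}.Finite)
    (hQm : Set.ncard {G : Set E | G.Nonempty ∧ IsExposed ℝ Q G} = m) :
    {C : Set E | C.Nonempty ∧ IsExposed ℝ (P + Q) C}.Finite ∧
      Set.ncard {C : Set E | C.Nonempty ∧ IsExposed ℝ (P + Q) C} ≤ n * m := by
  rw [← Set.encard_le_coe_iff_finite_ncard_le, Nat.cast_mul, ← hPn, ← hQm, hP.cast_ncard_eq,
    hQ.cast_ncard_eq]
  simpa only [map_mul, Set.toENat_cardinalMk, exposedFaces] using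
    OrderHomClass.mono Cardinal.toENat (card_exposedFaces_minkowski_sum_le_general (𝕜 := ℝ) P Q)
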